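/- arXiv:1810.07956 — 3 statements merged into one kernel-verified Lean document; each statement's English description precedes it below -/
import Mathlib

section
/- For all n ≥ 0, E_{2n+3} = (-1)^n · 2 · A'_{2n+2}(-1), where A'_n denotes the derivative of the Eulerian polynomial A_n(q) and E_m is the number of alternating permutations of [m]. -/
open Finset

/-- The set of (0-based) descent indices of a permutation of `Fin n`:
`i` is a descent index if `π i > π (i+1)` (so the 1-based descent position is `i+1`). -/
def descentSet {n : ℕ} (π : Equiv.Perm (Fin n)) : Finset ℕ :=
  (Finset.range n).filter
    (fun i => ∃ h : i + 1 < n, π ⟨i + 1, h⟩ < π ⟨i, Nat.lt_of_succ_lt h⟩)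

/-- The number of descents of `π`. -/
def des {n : ℕ} (π : Equiv.Perm (Fin n)) : ℕ := (descentSet π).card

/-- The number of descents of `π` at odd (1-based) positions, i.e. even 0-based indices. -/
def odes {n : ℕ} (π : Equiv.Perm (Fin n)) : ℕ :=
  ((descentSet π).filter (fun i => Even i)).card

/-- The number of descents of `π` at even (1-based) positions, i.e. odd 0-based indices. -/
def edes {n : ℕ} (π : Equiv.Perm (Fin n)) : ℕ :=
  ((descentSet π).filter (fun i => Odd i)).card

/-- The refined Eulerian polynomial `A_n(p,q) = Σ_π p^{odes π} q^{edes π}`. -/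
def refinedEulerian (n : ℕ) (p q : ℝ) : ℝ :=
  ∑ π : Equiv.Perm (Fin n), p ^ odes π * q ^ edes π

/-- The Eulerian polynomial `A_n(q) = Σ_π q^{des π}` as a function. -/
def eulerianEval (n : ℕ) (q : ℝ) : ℝ :=
  ∑ π : Equiv.Perm (Fin n), q ^ des π

/-- The Eulerian polynomial `A_n(q)` as a polynomial. -/
noncomputable def eulerianPolynomial (n : ℕ) : Polynomial ℝ :=
  ∑ π : Equiv.Perm (Fin n), Polynomial.X ^ des π

/-- The Eulerian number `A_{n,k}`: the number of permutations of `[n]` with `k` descents. -/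
def eulerianNumber (n k : ℕ) : ℕ :=
  (Finset.univ.filter (fun π : Equiv.Perm (Fin n) => des π = k)).card

/-- A permutation `a_1 a_2 … a_n` is alternating if `a_1 > a_2 < a_3 > ⋯`. -/
def IsAlternating {n : ℕ} (π : Equiv.Perm (Fin n)) : Prop :=
  ∀ i : ℕ, ∀ h : i + 1 < n,
    (π ⟨i + 1, h⟩ < π ⟨i, Nat.lt_of_succ_lt h⟩ ↔ Even i)

open scoped Classical in
/-- The Euler number `E_n`: the number of alternating permutations of `[n]`. -/
noncomputable def eulerNumber (n : ℕ) : ℕ :=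
  (Finset.univ.filter (fun π : Equiv.Perm (Fin n) => IsAlternating π)).card

/-- `a_{n,k}`: the number of permutations of `[n]` with `k` even descents and no odd descents. -/
def aNum (n k : ℕ) : ℕ :=
  (Finset.univ.filter (fun π : Equiv.Perm (Fin n) => edes π = k ∧ odes π = 0)).card

/-- The arrangements of a finite set `S`: the duplicate-free lists whose set of entries is `S`. -/
noncomputable def arrangements {α : Type*} [DecidableEq α] (S : Finset α) : Finset (List α) :=
  S.toList.permutations.toFinset

theorem mem_arrangements {α : Type*} [DecidableEq α] {S : Finset α} {l : List α} :
    l ∈ arrangements S ↔ l.Nodup ∧ l.toFinset = S := by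
  rw [arrangements, List.mem_toFinset, List.mem_permutations]
  constructor
  · intro h
    exact ⟨h.nodup_iff.2 S.nodup_toList, by rw [List.toFinset_eq_of_perm _ _ h, S.toList_toFinset]⟩
  · rintro ⟨h, rfl⟩
    exact ((List.toFinset_toList h).symm)

theorem arrangements_empty {α : Type*} [DecidableEq α] :
    arrangements (∅ : Finset α) = {[]} := by
  ext l
  simp only [mem_arrangements, List.toFinset_eq_empty_iff, Finset.mem_singleton]
  exact ⟨And.right, fun h => ⟨h ▸ List.nodup_nil, h⟩⟩

/-- Splitting the arrangements of `insert m S` at the entry `m`. -/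
theorem sum_arrangements_insert {α R : Type*} [DecidableEq α] [AddCommMonoid R]
    {S : Finset α} {m : α} (hm : m ∉ S) (f : List α → R) :
    ∑ l ∈ arrangements (insert m S), f l =
      ∑ T ∈ S.powerset, ∑ l₁ ∈ arrangements T, ∑ l₂ ∈ arrangements (S \ T),
        f (l₁ ++ m :: l₂) := by
  simp_rw [← Finset.sum_product']
  rw [Finset.sum_sigma']
  symm
  refine Finset.sum_bij (fun x _ => x.2.1 ++ m :: x.2.2) ?_ ?_ ?_ (fun _ _ => rfl)
  · rintro ⟨T, l₁, l₂⟩ h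
    simp only [Finset.mem_sigma, Finset.mem_powerset, Finset.mem_product, mem_arrangements] at h
    obtain ⟨hT, ⟨h₁, rfl⟩, h₂, h₃⟩ := h
    rw [Finset.ext_iff] at h₃
    simp only [Finset.subset_iff, List.mem_toFinset, Finset.mem_sdiff] at hT h₃
    refine mem_arrangements.2 ⟨?_, ?_⟩
    · rw [List.nodup_append, List.nodup_cons]
      grind
    · ext x
      simp only [List.mem_toFinset, List.mem_append, List.mem_cons, Finset.mem_insert]
      grind
  · rintro ⟨T, l₁, l₂⟩ h ⟨T', l₁', l₂'⟩ h' e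
    simp only [Finset.mem_sigma, Finset.mem_powerset, Finset.mem_product, mem_arrangements]
      at h h' e
    obtain ⟨hT, ⟨-, rfl⟩, -, h₃⟩ := h
    obtain ⟨hT', ⟨-, rfl⟩, -, h₃'⟩ := h'
    rw [Finset.ext_iff] at h₃ h₃'
    simp only [Finset.subset_iff, List.mem_toFinset, Finset.mem_sdiff] at hT h₃ hT' h₃'
    rw [List.append_cons_inj_of_notMem (by grind) (by grind)] at e
    obtain ⟨rfl, -, rfl⟩ := e
    rfl
  · intro l hl
    obtain ⟨hn, hl⟩ := mem_arrangements.1 hl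
    obtain ⟨l₁, l₂, rfl⟩ := List.append_of_mem
      (List.mem_toFinset.1 (hl.symm ▸ Finset.mem_insert_self m S) : m ∈ l)
    rw [List.nodup_append, List.nodup_cons] at hn
    rw [Finset.ext_iff] at hl
    simp only [List.mem_toFinset, List.mem_append, List.mem_cons, Finset.mem_insert] at hl
    refine ⟨⟨l₁.toFinset, l₁, l₂⟩, ?_, rfl⟩
    simp only [Finset.mem_sigma, Finset.mem_powerset, Finset.mem_product, mem_arrangements,
      Finset.subset_iff, List.mem_toFinset, Finset.ext_iff, Finset.mem_sdiff]
    grind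

theorem sum_perm_ofFn {R : Type*} [AddCommMonoid R] {n : ℕ} (f : List (Fin n) → R) :
    ∑ π : Equiv.Perm (Fin n), f (List.ofFn π) =
      ∑ l ∈ arrangements (Finset.univ : Finset (Fin n)), f l := by
  refine Finset.sum_bij (fun π _ => List.ofFn π) ?_ ?_ ?_ (fun _ _ => rfl)
  · intro π _
    refine mem_arrangements.2 ⟨List.nodup_ofFn.2 π.injective, ?_⟩
    ext x
    simpa [List.mem_ofFn] using π.surjective x
  · intro π _ σ _ h
    exact Equiv.coe_fn_injective (List.ofFn_injective h)
  · intro l hl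
    obtain ⟨hn, hl⟩ := mem_arrangements.1 hl
    have hlen : l.length = n := by
      rw [← List.toFinset_card_of_nodup hn, hl, Finset.card_univ, Fintype.card_fin]
    have hinj : Function.Injective (fun i : Fin n => l.get (i.cast hlen.symm)) := fun i j h => by
      simpa using (List.nodup_iff_injective_get.1 hn) h
    refine ⟨Equiv.ofBijective _ (Finite.injective_iff_bijective.1 hinj), Finset.mem_univ _, ?_⟩
    refine List.ext_get (by simp [hlen]) fun i h₁ h₂ => ?_
    simp

/-- If a statistic on lists splits at the minimal entry, then its sum over the arrangements of a
set depends only on the size of the set, and these sums satisfy a quadratic recurrence. -/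
theorem sum_arrangements_succ {R : Type*} [CommSemiring R]
    (w : ∀ {α : Type} [LinearOrder α], List α → R) (x y z : R)
    (hnil : ∀ (α β : Type) [LinearOrder α] [LinearOrder β], w ([] : List α) = w ([] : List β))
    (hw : ∀ {α : Type} [LinearOrder α] (m : α) (l₁ l₂ : List α),
      (∀ a ∈ l₁, m < a) → (∀ a ∈ l₂, m < a) →
      w (l₁ ++ m :: l₂) = x * (w l₁ * w l₂) + (if l₁ = [] then y * w l₂ else 0) +
        (if l₁ = [] ∧ l₂ = [] then z else 0))
    (a : ℕ → R) (ha : ∀ n, a n = ∑ π : Equiv.Perm (Fin n), w (List.ofFn π)) (n : ℕ) :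
    a (n + 1) = x * ∑ k ∈ Finset.range (n + 1), n.choose k * (a k * a (n - k)) + y * a n +
      (if n = 0 then z else 0) := by
  have split : ∀ {α : Type} [LinearOrder α] (S : Finset α) (m : α), (∀ b ∈ S, m < b) →
      ∑ l ∈ arrangements (insert m S), w l =
        x * ∑ T ∈ S.powerset, (∑ l ∈ arrangements T, w l) * (∑ l ∈ arrangements (S \ T), w l) +
          y * ∑ l ∈ arrangements S, w l + (if S.card = 0 then z else 0) := by
    intro α _ S m hm
    have inner : ∀ T ∈ S.powerset, ∑ l₁ ∈ arrangements T, ∑ l₂ ∈ arrangements (S \ T),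
        w (l₁ ++ m :: l₂) =
        x * ((∑ l ∈ arrangements T, w l) * (∑ l ∈ arrangements (S \ T), w l)) +
          (if T = ∅ then y * (∑ l ∈ arrangements (S \ T), w l) else 0) +
          (if T = ∅ then if S.card = 0 then z else 0 else 0) := by
      intro T hT
      rw [Finset.mem_powerset] at hT
      have step : ∑ l₁ ∈ arrangements T, ∑ l₂ ∈ arrangements (S \ T), w (l₁ ++ m :: l₂) =
          ∑ l₁ ∈ arrangements T, ∑ l₂ ∈ arrangements (S \ T), (x * (w l₁ * w l₂) +
            (if T = ∅ then y * w l₂ else 0) +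
            (if T = ∅ ∧ S \ T = ∅ then z else 0)) := by
        refine Finset.sum_congr rfl fun l₁ h₁ => Finset.sum_congr rfl fun l₂ h₂ => ?_
        obtain ⟨-, rfl⟩ := mem_arrangements.1 h₁
        obtain ⟨-, h₃⟩ := mem_arrangements.1 h₂
        rw [hw]
        · simp only [← h₃, List.toFinset_eq_empty_iff]
        · intro b hb
          exact hm b (hT (List.mem_toFinset.2 hb))
        · intro b hb
          have : b ∈ S \ l₁.toFinset := h₃ ▸ List.mem_toFinset.2 hb
          exact hm b (Finset.mem_sdiff.1 this).1
      rw [step]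
      simp_rw [Finset.sum_add_distrib]
      congr 2
      · simp_rw [← Finset.mul_sum]
        rw [Finset.sum_mul]
      · by_cases hT0 : T = ∅
        · subst hT0
          simp [arrangements_empty, Finset.mul_sum]
        · simp [hT0]
      · by_cases hT0 : T = ∅
        · subst hT0
          by_cases hS : S = ∅
          · subst hS
            simp [arrangements_empty]
          · simp [hS]
        · simp [hT0]
    rw [sum_arrangements_insert (fun h => (hm m h).false), Finset.sum_congr rfl inner]
    simp_rw [Finset.sum_add_distrib, ← Finset.mul_sum]
    simp
  have card_sum : ∀ S : ℕ → R, ∀ (k : ℕ), ∀ {α : Type} [LinearOrder α] (U : Finset α), U.card = k →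
      ∑ T ∈ U.powerset, S T.card = ∑ j ∈ Finset.range (k + 1), k.choose j * S j := by
    intro S k α _ U hU
    simp [Finset.sum_powerset_apply_card, hU]
  have key : ∀ (n : ℕ) {α : Type} [LinearOrder α] (S : Finset α), S.card = n →
      ∑ l ∈ arrangements S, w l = a n := by
    intro n
    induction n using Nat.strong_induction_on with
    | _ n ih =>
      have rec_eq : ∀ (k : ℕ), n = k + 1 → ∀ {α : Type} [LinearOrder α] (S : Finset α),
          S.card = n → ∑ l ∈ arrangements S, w l =
            x * ∑ j ∈ Finset.range (k + 1), k.choose j * (a j * a (k - j)) + y * a k +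
              (if k = 0 then z else 0) := by
        intro k hk α _ S hS
        have hne : S.Nonempty := Finset.card_pos.1 (by omega)
        have hmem := S.min'_mem hne
        have hcard : (S.erase (S.min' hne)).card = k := by
          rw [Finset.card_erase_of_mem hmem]; omega
        have h := split (S.erase (S.min' hne)) (S.min' hne)
          (fun b hb => S.min'_lt_of_mem_erase_min' hne hb)
        rw [Finset.insert_erase hmem] at h
        rw [h, ih k (by omega) _ hcard, hcard,
          ← card_sum (fun j => a j * a (k - j)) k _ hcard]
        congr 3
        refine Finset.sum_congr rfl fun T hT => ?_
        rw [Finset.mem_powerset] at hT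
        have hle := Finset.card_le_card hT
        rw [ih T.card (by omega) T rfl, ih (k - T.card) (by omega)]
        rw [Finset.card_sdiff_of_subset hT, hcard]
      intro α _ S hS
      rw [ha, sum_perm_ofFn]
      rcases n with _ | k
      · rw [Finset.card_eq_zero] at hS
        subst hS
        rw [Finset.univ_eq_empty, arrangements_empty, arrangements_empty, Finset.sum_singleton,
          Finset.sum_singleton]
        exact hnil _ _
      · rw [rec_eq k rfl S hS, rec_eq k rfl Finset.univ (by simp)]
  obtain ⟨m, S, hS, hm⟩ : ∃ (m : ℕ) (S : Finset ℕ), S.card = n ∧ ∀ b ∈ S, m < b :=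
    ⟨0, Finset.Icc 1 n, by simp, fun b hb => by simp at hb; omega⟩
  have hmS : m ∉ S := fun h => (hm m h).false
  rw [← key (n + 1) (insert m S) (by rw [Finset.card_insert_of_notMem hmS, hS]), split S m hm,
    key n S hS, hS, ← card_sum (fun j => a j * a (n - j)) n S hS]
  congr 3
  refine Finset.sum_congr rfl fun T hT => ?_
  rw [Finset.mem_powerset] at hT
  rw [key _ T rfl, key _ (S \ T) rfl, Finset.card_sdiff_of_subset hT, hS]

/-- The number of descents of a list. -/
def listDes {α : Type*} [LinearOrder α] : List α → ℕ
  | a :: b :: l => (if b < a then 1 else 0) + listDes (b :: l)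
  | _ => 0

theorem listDes_append_min_cons {α : Type*} [LinearOrder α] {m : α} {l₁ l₂ : List α}
    (h₁ : ∀ a ∈ l₁, m < a) (h₂ : ∀ a ∈ l₂, m < a) :
    listDes (l₁ ++ m :: l₂) = (if l₁ = [] then 0 else 1) + listDes l₁ + listDes l₂ := by
  induction l₁ with
  | nil =>
    cases l₂ with
    | nil => simp [listDes]
    | cons b l => simp [listDes, (h₂ b (by simp)).le]
  | cons a l ih =>
    have ih := ih (fun b hb => h₁ b (by simp [hb]))
    cases l with
    | nil =>
      have := h₁ a (by simp)
      simp_all [listDes]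
    | cons b l =>
      simp only [List.cons_append, listDes] at ih ⊢
      rw [ih]
      simp
      ring

theorem card_filter_descents_eq_listDes {α : Type*} [LinearOrder α] (l : List α) :
    ((Finset.range l.length).filter
      (fun i => ∃ h : i + 1 < l.length, l[i + 1] < l[i])).card = listDes l := by
  induction l with
  | nil => simp [listDes]
  | cons a l ih =>
    cases l with
    | nil => simp [listDes]
    | cons b l =>
      rw [listDes, ← ih, Finset.card_filter, Finset.card_filter]
      refine (Finset.sum_range_succ' _ (b :: l).length).trans ?_
      rw [add_comm]
      simp

theorem des_eq_listDes {n : ℕ} (π : Equiv.Perm (Fin n)) : des π = listDes (List.ofFn π) := by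
  rw [← card_filter_descents_eq_listDes]
  simp [des, descentSet]

/-- The lists `a₁ > a₂ ≤ a₃ > ⋯ ≤ aₖ` of odd length `k`. -/
def OddAlternating {α : Type*} [LinearOrder α] : List α → Prop
  | [] => False
  | [_] => True
  | [_, _] => False
  | a :: b :: c :: l => b < a ∧ ¬ c < b ∧ OddAlternating (c :: l)

theorem oddAlternating_append_min_cons {α : Type*} [LinearOrder α] {m : α} {l₁ l₂ : List α}
    (h₁ : ∀ a ∈ l₁, m < a) (h₂ : ∀ a ∈ l₂, m < a) :
    OddAlternating (l₁ ++ m :: l₂) ↔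
      (OddAlternating l₁ ∧ OddAlternating l₂) ∨ (l₁ = [] ∧ l₂ = []) := by
  induction l₁ using OddAlternating.induct with
  | case1 =>
    rcases l₂ with _ | ⟨b, _ | ⟨c, l⟩⟩
    · simp [OddAlternating]
    · simp [OddAlternating]
    · simp [OddAlternating, (h₂ b (by simp)).le]
  | case2 a =>
    have := h₁ a (by simp)
    rcases l₂ with _ | ⟨c, l⟩
    · simp [OddAlternating]
    · have := h₂ c (by simp)
      simp_all [OddAlternating, le_of_lt]
  | case3 a b =>
    have := h₁ b (by simp)
    simp [OddAlternating, this]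
  | case4 a b c l ih =>
    have ih := ih (fun x hx => h₁ x (by simp at hx ⊢; tauto))
    simp only [List.cons_append, OddAlternating] at ih ⊢
    rw [ih]
    simp
    tauto

theorem oddAlternating_iff {α : Type*} [LinearOrder α] (l : List α) :
    OddAlternating l ↔ Odd l.length ∧
      ∀ i, ∀ h : i + 1 < l.length, l[i + 1] < l[i] ↔ Even i := by
  induction l using OddAlternating.induct with
  | case1 => simp [OddAlternating]
  | case2 a => simp [OddAlternating]
  | case3 a b =>
    simp only [OddAlternating, List.length_cons, List.length_nil, false_iff]
    exact fun h => absurd h.1 (by decide)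
  | case4 a b c l ih =>
    rw [OddAlternating, ih]
    constructor
    · rintro ⟨hab, hbc, hodd, h⟩
      refine ⟨by simp only [List.length_cons] at hodd ⊢; grind, ?_⟩
      rintro (_ | _ | i) hi
      · simpa using hab
      · simpa using hbc
      · have := h i (by simpa using hi)
        simp only [List.getElem_cons_succ] at this ⊢
        rw [this]
        grind
    · rintro ⟨hodd, h⟩
      refine ⟨by simpa using h 0 (by simp), (h 1 (by simp)).not.2 (by decide), ?_, ?_⟩
      · simp only [List.length_cons] at hodd ⊢; grind
      · intro i hi
        have := h (i + 2) (by simpa using hi)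
        simp only [List.getElem_cons_succ] at this ⊢
        rw [this]
        grind

theorem oddAlternating_ofFn_iff {n : ℕ} (π : Equiv.Perm (Fin n)) :
    OddAlternating (List.ofFn π) ↔ Odd n ∧ IsAlternating π := by
  rw [oddAlternating_iff]
  simp [IsAlternating]

theorem eulerianPolynomial_succ (n : ℕ) :
    eulerianPolynomial (n + 1) =
      Polynomial.X * ∑ k ∈ Finset.range (n + 1),
        n.choose k * (eulerianPolynomial k * eulerianPolynomial (n - k)) +
      (1 - Polynomial.X) * eulerianPolynomial n := by
  have h := sum_arrangements_succ (R := Polynomial ℝ) (fun l => Polynomial.X ^ listDes l)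
    Polynomial.X (1 - Polynomial.X) 0 (fun _ _ => rfl)
    (fun m l₁ l₂ h₁ h₂ => by
      rw [listDes_append_min_cons h₁ h₂]
      by_cases hl : l₁ = []
      · subst hl
        simp [listDes]
        ring
      · simp [hl]
        ring) eulerianPolynomial
    (fun n => by simp [eulerianPolynomial, des_eq_listDes]) n
  simpa using h

theorem eulerianPolynomial_zero : eulerianPolynomial 0 = 1 := by
  simp [eulerianPolynomial, des, descentSet]

/-- The Euler numbers of odd index, extended by zero to even indices. -/
noncomputable def oddEulerNumber (n : ℕ) : ℝ := if Odd n then eulerNumber n else 0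

theorem oddEulerNumber_succ (n : ℕ) :
    oddEulerNumber (n + 1) =
      ∑ k ∈ Finset.range (n + 1), n.choose k * (oddEulerNumber k * oddEulerNumber (n - k)) +
      (if n = 0 then 1 else 0) := by
  classical
  have h := sum_arrangements_succ (R := ℝ) (fun l => if OddAlternating l then 1 else 0)
    1 0 1 (fun _ _ => by simp [OddAlternating])
    (fun m l₁ l₂ h₁ h₂ => by
      simp only [oddAlternating_append_min_cons h₁ h₂]
      by_cases hl : l₁ = [] ∧ l₂ = []
      · obtain ⟨rfl, rfl⟩ := hl
        simp [OddAlternating]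
      · by_cases h₃ : OddAlternating l₁ <;> simp [hl, h₃]) oddEulerNumber
    (fun n => by
      simp only [oddEulerNumber, eulerNumber, oddAlternating_ofFn_iff]
      by_cases hn : Odd n
      · simp [hn]
      · simp [hn]) n
  simpa using h

/-- The values `Aₙ(-1)` are the signed odd Euler numbers, apart from `A₀(-1) = 1`. -/
theorem eulerianPolynomial_eval_neg_one (n : ℕ) :
    (eulerianPolynomial n).eval (-1) =
      (-1) ^ (n / 2) * oddEulerNumber n + (if n = 0 then 1 else 0) := by
  induction n using Nat.strong_induction_on with
  | _ n ih =>
    rcases n with _ | n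
    · simp [eulerianPolynomial_zero, oddEulerNumber]
    have hterm : ∀ k ∈ Finset.range (n + 1),
        (n.choose k : ℝ) * ((eulerianPolynomial k).eval (-1) *
          (eulerianPolynomial (n - k)).eval (-1)) =
        -((-1) ^ ((n + 1) / 2) * (n.choose k * (oddEulerNumber k * oddEulerNumber (n - k)))) +
        ((if k = 0 then (-1) ^ (n / 2) * oddEulerNumber n + (if n = 0 then 1 else 0) else 0) +
         (if k = n then (-1) ^ (n / 2) * oddEulerNumber n else 0)) := by
      intro k hk
      have hk : k ≤ n := by simpa [Nat.lt_succ_iff] using hk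
      have hz : oddEulerNumber 0 = 0 := by simp [oddEulerNumber]
      rw [ih k (by omega), ih (n - k) (by omega)]
      by_cases hk0 : k = 0
      · subst hk0
        by_cases hn : n = 0
        · subst hn; simp [hz]
        · simp [hz, hn, Ne.symm hn]
      by_cases hkn : k = n
      · subst hkn
        simp [hz, hk0]
      have hnk : n - k ≠ 0 := by omega
      simp only [hk0, hkn, hnk, if_false, add_zero]
      by_cases hodd : Odd k ∧ Odd (n - k)
      · obtain ⟨⟨i, hi⟩, ⟨j, hj⟩⟩ := hodd
        have h₁ : k / 2 = i := by omega
        have h₂ : (n - k) / 2 = j := by omega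
        have h₃ : (n + 1) / 2 = i + j + 1 := by omega
        rw [h₁, h₂, h₃]
        ring
      · have : oddEulerNumber k * oddEulerNumber (n - k) = 0 := by
          rw [mul_eq_zero]
          simp only [oddEulerNumber]
          grind
        linear_combination ((n.choose k : ℝ) * (-1) ^ (k / 2) * (-1) ^ ((n - k) / 2) +
          (n.choose k : ℝ) * (-1) ^ ((n + 1) / 2)) * this
    rw [eulerianPolynomial_succ, oddEulerNumber_succ]
    simp only [Polynomial.eval_add, Polynomial.eval_mul, Polynomial.eval_finsetSum,
      Polynomial.eval_natCast, Polynomial.eval_X, Polynomial.eval_sub, Polynomial.eval_one]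
    rw [Finset.sum_congr rfl hterm, ih n (by omega)]
    simp only [Finset.sum_add_distrib, Finset.sum_neg_distrib, ← Finset.mul_sum]
    rcases Nat.eq_zero_or_pos n with rfl | hn
    · simp [oddEulerNumber]
    · simp [hn.ne']
      ring

/-- The exponential generating function of a sequence. -/
noncomputable def egf (u : ℕ → ℝ) : PowerSeries ℝ := PowerSeries.mk fun n => u n / n.factorial

theorem derivative_egf (u : ℕ → ℝ) :
    PowerSeries.derivative ℝ (egf u) = egf fun n => u (n + 1) := by
  ext n
  rw [PowerSeries.coeff_derivative, egf, egf, PowerSeries.coeff_mk, PowerSeries.coeff_mk,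
    Nat.factorial_succ]
  push_cast
  field_simp

theorem egf_mul (u v : ℕ → ℝ) :
    egf u * egf v =
      egf fun n => ∑ k ∈ Finset.range (n + 1), n.choose k * (u k * v (n - k)) := by
  ext n
  simp only [egf, PowerSeries.coeff_mul, PowerSeries.coeff_mk]
  rw [Finset.Nat.sum_antidiagonal_eq_sum_range_succ
    (fun i j => u i / (i.factorial : ℝ) * (v j / (j.factorial : ℝ))), Finset.sum_div]
  refine Finset.sum_congr rfl fun k hk => ?_
  rw [Nat.cast_choose ℝ (by simpa [Nat.lt_succ_iff] using hk : k ≤ n)]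
  field_simp

theorem egf_add (u v : ℕ → ℝ) : egf u + egf v = egf fun n => u n + v n := by
  ext n
  simp [egf, add_div]

theorem egf_neg (u : ℕ → ℝ) : -egf u = egf fun n => -u n := by
  ext n
  simp [egf, neg_div]

/-- A power series solving a homogeneous first order linear differential equation with vanishing
constant term is zero. -/
theorem powerSeries_eq_zero_of_derivative_eq_mul {f g : PowerSeries ℝ}
    (h : PowerSeries.derivative ℝ f = g * f) (h0 : PowerSeries.coeff 0 f = 0) : f = 0 := by
  ext n
  rw [map_zero]
  induction n using Nat.strong_induction_on with
  | _ n ih =>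
    rcases n with _ | n
    · exact h0
    have hn := congrArg (PowerSeries.coeff n) h
    rw [PowerSeries.coeff_derivative, PowerSeries.coeff_mul, Finset.sum_eq_zero] at hn
    · exact (mul_eq_zero.1 hn).resolve_right (by positivity)
    · intro p hp
      rw [ih p.2 (by have := Finset.HasAntidiagonal.mem_antidiagonal.1 hp; omega), mul_zero]

/-- The Eulerian recurrence `A_{n+1} = (1 + n q) A_n + q (1 - q) A_n'` at `q = -1`. -/
theorem two_mul_derivative_eulerianPolynomial_eval_neg_one (n : ℕ) :
    2 * (Polynomial.derivative (eulerianPolynomial n)).eval (-1) =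
      (1 - n) * (eulerianPolynomial n).eval (-1) - (eulerianPolynomial (n + 1)).eval (-1) := by
  set a : ℕ → ℝ := fun n => (eulerianPolynomial n).eval (-1) with ha
  set b : ℕ → ℝ := fun n => (Polynomial.derivative (eulerianPolynomial n)).eval (-1) with hb
  have hda : PowerSeries.derivative ℝ (egf a) = egf a + egf a - egf a * egf a := by
    rw [derivative_egf, sub_eq_add_neg, egf_mul, egf_neg, egf_add, egf_add]
    congr 1
    funext n
    simp only [ha]
    rw [eulerianPolynomial_succ]
    simp only [Polynomial.eval_add, Polynomial.eval_mul, Polynomial.eval_finsetSum,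
      Polynomial.eval_natCast, Polynomial.eval_X, Polynomial.eval_sub, Polynomial.eval_one]
    ring
  have hdb : PowerSeries.derivative ℝ (egf b) =
      (egf a * egf a + -egf a) + ((egf b + egf b) + -(egf b * egf a + egf a * egf b)) := by
    rw [derivative_egf]
    simp only [egf_mul, egf_neg, egf_add]
    congr 1
    funext n
    simp only [ha, hb]
    rw [eulerianPolynomial_succ]
    simp only [Polynomial.derivative_add, Polynomial.derivative_mul, Polynomial.derivative_X,
      Polynomial.derivative_sum, Polynomial.derivative_natCast, Polynomial.derivative_sub,
      Polynomial.derivative_one, Polynomial.eval_zero,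
      Polynomial.eval_add, Polynomial.eval_mul, Polynomial.eval_finsetSum,
      Polynomial.eval_natCast, Polynomial.eval_X, Polynomial.eval_sub, Polynomial.eval_one]
    rw [← Finset.sum_add_distrib]
    simp only [zero_mul, zero_add, mul_add, Finset.sum_add_distrib]
    ring
  have hzero : egf b + egf b - egf a +
      (1 + PowerSeries.X) * PowerSeries.derivative ℝ (egf a) = 0 := by
    refine powerSeries_eq_zero_of_derivative_eq_mul (g := 2 - 2 * egf a) ?_ ?_
    · rw [hda]
      simp only [map_add, map_sub, Derivation.leibniz, hda, hdb, smul_eq_mul,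
        PowerSeries.derivative_X, PowerSeries.derivative_one]
      ring
    · rw [derivative_egf]
      simp [egf, ha, hb, eulerianPolynomial_zero, eulerianPolynomial_succ, add_mul]
  have hn := congrArg (PowerSeries.coeff n) hzero
  rw [map_add, map_sub, map_add, add_mul, one_mul, map_add, map_zero] at hn
  have hX : PowerSeries.coeff n (PowerSeries.X * PowerSeries.derivative ℝ (egf a)) =
      n * (a n / n.factorial) := by
    rcases n with _ | n
    · simp
    · rw [PowerSeries.coeff_succ_X_mul, PowerSeries.coeff_derivative, egf, PowerSeries.coeff_mk]
      push_cast
      ring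
  rw [hX, derivative_egf] at hn
  simp only [egf, PowerSeries.coeff_mk] at hn
  field_simp at hn
  change 2 * b n = (1 - n) * a n - a (n + 1)
  linarith

/-- E_{2n+3} = (-1)^n · 2 · A'_{2n+2}(-1). -/
theorem euler_eq_two_deriv_eulerian_at_neg_one (n : ℕ) :
    (eulerNumber (2 * n + 3) : ℝ) =
      (-1) ^ n * 2 * (Polynomial.derivative (eulerianPolynomial (2 * n + 2))).eval (-1) := by
  have hodd : Odd (2 * n + 2 + 1) := ⟨n + 1, by ring⟩
  have heven : ¬ Odd (2 * n + 2) := by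
    rw [Nat.not_odd_iff_even]
    exact ⟨n + 1, by ring⟩
  have hdiv : (2 * n + 2 + 1) / 2 = n + 1 := by omega
  have hsq : ((-1 : ℝ) ^ n) * (-1) ^ n = 1 := by rw [← mul_pow]; norm_num
  rw [mul_assoc, two_mul_derivative_eulerianPolynomial_eval_neg_one,
    eulerianPolynomial_eval_neg_one, eulerianPolynomial_eval_neg_one, hdiv, oddEulerNumber,
    oddEulerNumber, if_neg heven, if_pos hodd]
  simp only [Nat.add_eq_zero_iff, OfNat.ofNat_ne_zero, one_ne_zero, and_false, if_false]
  rw [pow_succ]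
  linear_combination (-(eulerNumber (2 * n + 3) : ℝ)) * hsq
end

section
/- For n ≥ 0 the refined Eulerian polynomial satisfies A_{2n+1}(p,q) = (1+pq)^n · A_{2n+1}(0, (p+q)/(1+pq)) as an identity of rational functions (equivalently, as a polynomial identity after clearing denominators). -/
open Finset

/-- Inserting a prescribed last value `j` into the one-line notation of `σ`. -/
def permSnoc {m : ℕ} (j : Fin (m + 1)) (σ : Equiv.Perm (Fin m)) : Equiv.Perm (Fin (m + 1)) :=
  (finRotate (m + 1)).trans ((Equiv.Perm.decomposeFin.symm (0, σ)).trans j.cycleRange.symm)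

lemma permSnoc_last {m : ℕ} (j : Fin (m + 1)) (σ : Equiv.Perm (Fin m)) :
    permSnoc j σ (Fin.last m) = j := by
  simp [permSnoc]

lemma permSnoc_castSucc {m : ℕ} (j : Fin (m + 1)) (σ : Equiv.Perm (Fin m)) (i : Fin m) :
    permSnoc j σ i.castSucc = j.succAbove (σ i) := by
  simp [permSnoc, Fin.coeSucc_eq_succ]

lemma permSnoc_bijective (m : ℕ) :
    Function.Bijective
      (fun a : Fin (m + 1) × Equiv.Perm (Fin m) => permSnoc a.1 a.2) := by
  rw [Fintype.bijective_iff_injective_and_card]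
  constructor
  · rintro ⟨j, σ⟩ ⟨k, τ⟩ h
    have hjk : j = k := by
      simpa [permSnoc_last] using congrArg (fun e => e (Fin.last m)) h
    subst hjk
    refine Prod.ext rfl (Equiv.ext fun i => ?_)
    have := congrArg (fun e => e i.castSucc) h
    simpa [permSnoc_castSucc] using this
  · simp [Fintype.card_perm, Nat.factorial_succ]

/-- The product of the weights `x i` over the descent indices `i` of `π`. -/
def descentWeight {n : ℕ} (x : ℕ → ℝ) (π : Equiv.Perm (Fin n)) : ℝ :=
  ∏ i ∈ descentSet π, x i

lemma descentSet_permSnoc {m : ℕ} (j : Fin (m + 2)) (σ : Equiv.Perm (Fin (m + 1))) :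
    descentSet (permSnoc j σ) =
      if (σ (Fin.last m) : ℕ) < j then descentSet σ else insert m (descentSet σ) := by
  have key : ∀ i, i ∈ descentSet (permSnoc j σ) ↔
      i ∈ descentSet σ ∨ (i = m ∧ (j : ℕ) ≤ σ (Fin.last m)) := by
    intro i
    simp only [descentSet, mem_filter, mem_range]
    rcases lt_trichotomy i m with hi | rfl | hi
    · have e1 : (⟨i + 1, by omega⟩ : Fin (m + 2)) = (⟨i + 1, by omega⟩ : Fin (m + 1)).castSucc :=
        rfl
      have e2 : (⟨i, by omega⟩ : Fin (m + 2)) = (⟨i, by omega⟩ : Fin (m + 1)).castSucc := rfl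
      have h1 : i + 1 < m + 1 + 1 := by omega
      have h2 : i + 1 < m + 1 := by omega
      have h3 : i < m + 1 := by omega
      have h4 : i < m + 1 + 1 := by omega
      simp only [h1, h2, h3, h4, hi.ne, e1, e2, permSnoc_castSucc, exists_true_left,
        Fin.succAbove_lt_succAbove_iff, true_and, false_and, or_false]
    · have e1 : (⟨i + 1, by omega⟩ : Fin (i + 2)) = Fin.last (i + 1) := rfl
      have e2 : (⟨i, by omega⟩ : Fin (i + 2)) = (Fin.last i).castSucc := rfl
      simp only [e1, e2, permSnoc_castSucc, permSnoc_last, Fin.lt_succAbove_iff_le_castSucc,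
        Fin.le_def, Fin.val_castSucc]
      simp
    · have h1 : ¬ i + 1 < m + 1 + 1 := by omega
      have h2 : ¬ i + 1 < m + 1 := by omega
      simp [h1, h2, hi.ne']
  ext i
  rw [key]
  split_ifs with h
  · simp [not_le.mpr h]
  · simp [not_lt.mp h, or_comm]

lemma descentWeight_permSnoc {m : ℕ} (x : ℕ → ℝ) (j : Fin (m + 2))
    (σ : Equiv.Perm (Fin (m + 1))) :
    descentWeight x (permSnoc j σ) =
      descentWeight x σ * if (σ (Fin.last m) : ℕ) < j then 1 else x m := by
  unfold descentWeight
  rw [descentSet_permSnoc]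
  split_ifs with h
  · simp
  · rw [prod_insert (by simp [descentSet]), mul_comm]

/-- The total descent weight of all permutations of `Fin n`. -/
def weightSum (x : ℕ → ℝ) (n : ℕ) : ℝ :=
  ∑ π : Equiv.Perm (Fin n), descentWeight x π

/-- The total descent weight of the permutations of `Fin (m + 1)` whose last value is `j`. -/
def lastWeight (x : ℕ → ℝ) : ℕ → ℕ → ℝ
  | 0, _ => 1
  | m + 1, j => x m * ∑ i ∈ range (m + 1), lastWeight x m i +
      (1 - x m) * ∑ i ∈ range j, lastWeight x m i

lemma sum_descentWeight_mul_last (x : ℕ → ℝ) (m : ℕ) (F : ℕ → ℝ) :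
    ∑ π : Equiv.Perm (Fin (m + 1)), descentWeight x π * F (π (Fin.last m)) =
      ∑ j ∈ range (m + 1), F j * lastWeight x m j := by
  induction m generalizing F with
  | zero => simp [lastWeight, descentWeight, descentSet]
  | succ m ih =>
    rw [← (permSnoc_bijective (m + 1)).sum_comp, Fintype.sum_prod_type, sum_range]
    refine sum_congr rfl fun j _ => ?_
    simp only [descentWeight_permSnoc, permSnoc_last]
    rw [← sum_mul, ih (fun i => if i < (j : ℕ) then 1 else x m), mul_comm, lastWeight]
    congr 1
    have hj : range (j : ℕ) = (range (m + 1)).filter (fun i => i < (j : ℕ)) := by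
      ext i
      have := j.2
      simp only [mem_range, mem_filter]
      omega
    rw [hj, sum_filter, mul_sum, mul_sum, ← sum_add_distrib]
    refine sum_congr rfl fun i _ => ?_
    split_ifs <;> ring

lemma weightSum_succ (x : ℕ → ℝ) (m : ℕ) :
    weightSum x (m + 1) = ∑ j ∈ range (m + 1), lastWeight x m j := by
  simpa [weightSum] using sum_descentWeight_mul_last x m (fun _ => 1)

/-- The total weight of permutations of `Fin n` times the weight of a descent following them. -/
def junctionWeight (x : ℕ → ℝ) : ℕ → ℝ
  | 0 => 1
  | n + 1 => x n * weightSum x (n + 1)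

lemma sum_range_choose_right (n k : ℕ) :
    ∑ j ∈ range n, (j.choose k : ℝ) = (n.choose (k + 1) : ℝ) := by
  induction n with
  | zero => simp
  | succ n ih => rw [sum_range_succ, ih, Nat.choose_succ_succ]; push_cast; ring

lemma lastWeight_eq (x : ℕ → ℝ) (m j : ℕ) :
    lastWeight x m j = ∑ a ∈ antidiagonal m,
      junctionWeight x a.1 * (∏ l ∈ range a.2, (1 - x (a.1 + l))) * (j.choose a.2 : ℝ) := by
  induction m generalizing j with
  | zero => simp [lastWeight, junctionWeight]
  | succ m ih =>
    rw [Finset.Nat.sum_antidiagonal_succ', lastWeight, ← weightSum_succ]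
    simp only [ih]
    rw [sum_comm (s := range j), mul_sum]
    congr 1
    · simp [junctionWeight]
    · refine sum_congr rfl fun a ha => ?_
      rw [← mul_sum, sum_range_choose_right, prod_range_succ, mem_antidiagonal.mp ha]
      ring

lemma weightSum_succ_div_factorial (x : ℕ → ℝ) (m : ℕ) :
    weightSum x (m + 1) / (m + 1).factorial = ∑ a ∈ antidiagonal m,
      junctionWeight x a.1 / a.1.factorial *
        ((∏ l ∈ range a.2, (1 - x (a.1 + l))) / (a.2 + 1).factorial) := by
  rw [weightSum_succ, sum_congr rfl fun i _ => lastWeight_eq x m i, sum_comm, sum_div]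
  refine sum_congr rfl fun a ha => ?_
  rw [← mul_sum, sum_range_choose_right]
  have h : a.1 + (a.2 + 1) = m + 1 := by rw [← mem_antidiagonal.mp ha]; ring
  rw [← h, add_comm a.1, Nat.cast_add_choose]
  have := Nat.factorial_ne_zero (a.2 + 1)
  have := Nat.factorial_ne_zero a.1
  have := Nat.factorial_ne_zero (a.2 + 1 + a.1)
  field_simp

/-- The weights recording odd positions by `p` and even positions by `q`. -/
def parityWeight (p q : ℝ) (i : ℕ) : ℝ := if Even i then p else q

lemma weightSum_parityWeight (p q : ℝ) (n : ℕ) :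
    weightSum (parityWeight p q) n = refinedEulerian n p q := by
  unfold weightSum refinedEulerian descentWeight parityWeight odes edes
  refine sum_congr rfl fun π _ => ?_
  rw [prod_ite]
  simp [Nat.not_even_iff_odd]

lemma prod_one_sub_parityWeight (p q : ℝ) (i k : ℕ) :
    ∏ l ∈ range k, (1 - parityWeight p q (i + l)) =
      ((1 - p) * (1 - q)) ^ (k / 2) *
        if Even k then 1 else 1 - parityWeight p q i := by
  induction k with
  | zero => simp
  | succ k ih =>
    rw [prod_range_succ, ih]
    rcases Nat.even_or_odd' k with ⟨c, rfl | rfl⟩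
    · have h1 : (2 * c + 1) / 2 = c := by omega
      have h2 : 2 * c / 2 = c := by omega
      simp [h1, h2, parityWeight, Nat.even_add]
    · have h1 : (2 * c + 1 + 1) / 2 = c + 1 := by omega
      have h2 : (2 * c + 1) / 2 = c := by omega
      by_cases hi : Even i <;> simp [h1, h2, parityWeight, Nat.even_add, hi] <;> ring

/-- The series `sinh (√r z) / √r`. -/
noncomputable def sinhSeries (r : ℝ) : PowerSeries ℝ :=
  PowerSeries.mk fun k => if Even k then 0 else r ^ (k / 2) / k.factorial

/-- The series `(cosh (√r z) - 1) / r`. -/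
noncomputable def coshSeries (r : ℝ) : PowerSeries ℝ :=
  PowerSeries.mk fun k => if k ≠ 0 ∧ Even k then r ^ (k / 2 - 1) / k.factorial else 0

lemma derivative_coshSeries (r : ℝ) :
    PowerSeries.derivative ℝ (coshSeries r) = sinhSeries r := by
  ext k
  rw [PowerSeries.coeff_derivative, coshSeries, sinhSeries, PowerSeries.coeff_mk,
    PowerSeries.coeff_mk]
  by_cases hk : Even k
  · simp [Nat.even_add, hk]
  · obtain ⟨c, rfl⟩ := Nat.not_even_iff_odd.mp hk
    have h1 : (2 * c + 1 + 1) / 2 - 1 = c := by omega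
    have h2 : (2 * c + 1) / 2 = c := by omega
    rw [if_pos ⟨by omega, by simp [Nat.even_add]⟩, if_neg hk, h1, h2,
      Nat.factorial_succ (2 * c + 1)]
    have := Nat.factorial_ne_zero (2 * c + 1)
    push_cast
    field_simp

lemma derivative_sinhSeries (r : ℝ) :
    PowerSeries.derivative ℝ (sinhSeries r) = 1 + PowerSeries.C r * coshSeries r := by
  ext k
  rw [PowerSeries.coeff_derivative, map_add, PowerSeries.coeff_C_mul, PowerSeries.coeff_one,
    coshSeries, sinhSeries, PowerSeries.coeff_mk, PowerSeries.coeff_mk]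
  rcases Nat.even_or_odd' k with ⟨c, rfl | rfl⟩
  · rcases c with _ | c
    · simp
    · have h1 : (2 * (c + 1) + 1) / 2 = c + 1 := by omega
      have h2 : 2 * (c + 1) / 2 - 1 = c := by omega
      rw [if_neg (by simp), if_neg (by omega), if_pos ⟨by omega, by simp⟩, h1, h2,
        Nat.factorial_succ (2 * (c + 1))]
      have := Nat.factorial_ne_zero (2 * (c + 1))
      push_cast
      field_simp
      ring
  · simp [Nat.even_add]

lemma sinhSeries_sq (r : ℝ) :
    sinhSeries r ^ 2 = 2 * coshSeries r + PowerSeries.C r * coshSeries r ^ 2 := by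
  have hs : PowerSeries.constantCoeff (sinhSeries r) = 0 := by
    rw [← PowerSeries.coeff_zero_eq_constantCoeff_apply]; simp [sinhSeries]
  have hc : PowerSeries.constantCoeff (coshSeries r) = 0 := by
    rw [← PowerSeries.coeff_zero_eq_constantCoeff_apply]; simp [coshSeries]
  apply PowerSeries.derivative.ext
  · have hC : PowerSeries.derivative ℝ (PowerSeries.C r) = 0 := PowerSeries.derivative_C
    have h2 : PowerSeries.derivative ℝ (2 : PowerSeries ℝ) = 0 :=
      PowerSeries.derivative_C (r := (2 : ℝ))
    simp only [map_add, Derivation.leibniz, pow_two, derivative_coshSeries,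
      derivative_sinhSeries, hC, h2, smul_eq_mul]
    ring
  · simp [hs, hc]

/-- The exponential generating function of the odd-size refined Eulerian polynomials. -/
noncomputable def oddSeries (p q : ℝ) : PowerSeries ℝ :=
  PowerSeries.mk fun m => if Even m then 0 else refinedEulerian m p q / m.factorial

/-- The exponential generating function of the refined Eulerian polynomials of positive even
size. -/
noncomputable def evenSeries (p q : ℝ) : PowerSeries ℝ :=
  PowerSeries.mk fun m => if m ≠ 0 ∧ Even m then refinedEulerian m p q / m.factorial else 0

lemma coeff_mul_succ_of_coeff_zero (f g : PowerSeries ℝ) (hg : PowerSeries.coeff 0 g = 0)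
    (m : ℕ) : PowerSeries.coeff (m + 1) (f * g) =
      ∑ a ∈ antidiagonal m, PowerSeries.coeff a.1 f * PowerSeries.coeff (a.2 + 1) g := by
  rw [PowerSeries.coeff_mul, Finset.Nat.sum_antidiagonal_succ', hg]
  simp

lemma coeff_junction (p q : ℝ) (m : ℕ) :
    junctionWeight (parityWeight p q) m / m.factorial =
      PowerSeries.coeff m (1 + PowerSeries.C q * evenSeries p q + PowerSeries.C p * oddSeries p q) := by
  simp only [map_add, PowerSeries.coeff_C_mul, PowerSeries.coeff_one, evenSeries, oddSeries,
    PowerSeries.coeff_mk]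
  rcases m with _ | m
  · simp [junctionWeight]
  · by_cases hm : Even m <;>
      simp [junctionWeight, weightSum_parityWeight, parityWeight, Nat.even_add, hm] <;> ring

lemma coeff_blockSeries (p q : ℝ) (i k : ℕ) :
    (∏ l ∈ range k, (1 - parityWeight p q (i + l))) / (k + 1).factorial =
      PowerSeries.coeff (k + 1) (sinhSeries ((1 - p) * (1 - q))) +
        (1 - parityWeight p q i) *
          PowerSeries.coeff (k + 1) (coshSeries ((1 - p) * (1 - q))) := by
  rw [prod_one_sub_parityWeight, sinhSeries, coshSeries, PowerSeries.coeff_mk,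
    PowerSeries.coeff_mk]
  rcases Nat.even_or_odd' k with ⟨c, rfl | rfl⟩
  · have h1 : (2 * c + 1) / 2 = c := by omega
    simp [h1]
  · have h1 : (2 * c + 1) / 2 = c := by omega
    have h2 : (2 * c + 1 + 1) / 2 - 1 = c := by omega
    rw [if_neg (by simp), if_pos (by simp [Nat.even_add]),
      if_pos ⟨by omega, by simp [Nat.even_add]⟩, h1, h2]
    ring

lemma coeff_oddSeries_of_even (p q : ℝ) {m : ℕ} (hm : Even m) :
    PowerSeries.coeff m (oddSeries p q) = 0 := by
  simp [oddSeries, hm]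

lemma coeff_evenSeries_of_odd (p q : ℝ) {m : ℕ} (hm : ¬ Even m) :
    PowerSeries.coeff m (1 + PowerSeries.C q * evenSeries p q) = 0 := by
  have : m ≠ 0 := by rintro rfl; simp at hm
  simp [evenSeries, hm, PowerSeries.coeff_one, this]

lemma coeff_sinhSeries_of_even (r : ℝ) {m : ℕ} (hm : Even m) :
    PowerSeries.coeff m (sinhSeries r) = 0 := by
  simp [sinhSeries, hm]

lemma coeff_coshSeries_of_odd (r : ℝ) {m : ℕ} (hm : ¬ Even m) :
    PowerSeries.coeff m (coshSeries r) = 0 := by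
  simp [coshSeries, hm]

lemma coeff_zero_coshSeries (r : ℝ) : PowerSeries.coeff 0 (coshSeries r) = 0 := by
  simp [coshSeries]

lemma refinedEulerian_succ_div_factorial (p q : ℝ) (m : ℕ) :
    refinedEulerian (m + 1) p q / (m + 1).factorial = ∑ a ∈ antidiagonal m,
      (PowerSeries.coeff a.1 (1 + PowerSeries.C q * evenSeries p q) +
        p * PowerSeries.coeff a.1 (oddSeries p q)) *
      (PowerSeries.coeff (a.2 + 1) (sinhSeries ((1 - p) * (1 - q))) +
        (1 - parityWeight p q a.1) *
          PowerSeries.coeff (a.2 + 1) (coshSeries ((1 - p) * (1 - q)))) := by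
  rw [← weightSum_parityWeight, weightSum_succ_div_factorial]
  refine sum_congr rfl fun a _ => ?_
  rw [coeff_junction, coeff_blockSeries, map_add, PowerSeries.coeff_C_mul]

lemma oddSeries_eq (p q : ℝ) :
    oddSeries p q =
      PowerSeries.C (p * (1 - q)) * (oddSeries p q * coshSeries ((1 - p) * (1 - q))) +
        (1 + PowerSeries.C q * evenSeries p q) * sinhSeries ((1 - p) * (1 - q)) := by
  ext n
  rw [map_add, PowerSeries.coeff_C_mul]
  rcases n with _ | m
  · rw [coeff_oddSeries_of_even _ _ Even.zero, PowerSeries.coeff_mul, PowerSeries.coeff_mul]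
    simp [coeff_zero_coshSeries, coeff_sinhSeries_of_even]
  rw [coeff_mul_succ_of_coeff_zero _ _ (coeff_zero_coshSeries _),
    coeff_mul_succ_of_coeff_zero _ _ (coeff_sinhSeries_of_even _ Even.zero), mul_sum,
    ← sum_add_distrib]
  by_cases hm : Even (m + 1)
  · rw [coeff_oddSeries_of_even _ _ hm, eq_comm]
    refine sum_eq_zero fun a ha => ?_
    rw [← mem_antidiagonal.mp ha, add_assoc, Nat.even_add] at hm
    by_cases h1 : Even a.1
    · rw [coeff_oddSeries_of_even _ _ h1, coeff_sinhSeries_of_even _ (hm.mp h1)]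
      ring
    · rw [coeff_evenSeries_of_odd _ _ h1, coeff_coshSeries_of_odd _ (mt hm.mpr h1)]
      ring
  · have h : PowerSeries.coeff (m + 1) (oddSeries p q) =
        refinedEulerian (m + 1) p q / (m + 1).factorial := by simp [oddSeries, hm]
    rw [h, refinedEulerian_succ_div_factorial]
    refine sum_congr rfl fun a ha => ?_
    rw [← mem_antidiagonal.mp ha, add_assoc, Nat.even_add] at hm
    by_cases h1 : Even a.1
    · rw [coeff_oddSeries_of_even _ _ h1,
        coeff_coshSeries_of_odd _ (fun h2 => hm (iff_of_true h1 h2))]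
      ring
    · rw [coeff_evenSeries_of_odd _ _ h1, coeff_sinhSeries_of_even (m := a.2 + 1) _
        (by_contra fun h2 => hm (iff_of_false h1 h2)), parityWeight, if_neg h1]
      ring

lemma evenSeries_eq (p q : ℝ) :
    evenSeries p q =
      PowerSeries.C (1 - p) * ((1 + PowerSeries.C q * evenSeries p q) *
          coshSeries ((1 - p) * (1 - q))) +
        PowerSeries.C p * (oddSeries p q * sinhSeries ((1 - p) * (1 - q))) := by
  ext n
  rw [map_add, PowerSeries.coeff_C_mul, PowerSeries.coeff_C_mul]
  rcases n with _ | m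
  · rw [PowerSeries.coeff_mul, PowerSeries.coeff_mul]
    simp [coeff_zero_coshSeries, coeff_sinhSeries_of_even, evenSeries]
  rw [coeff_mul_succ_of_coeff_zero _ _ (coeff_zero_coshSeries _),
    coeff_mul_succ_of_coeff_zero _ _ (coeff_sinhSeries_of_even _ Even.zero), mul_sum, mul_sum,
    ← sum_add_distrib]
  by_cases hm : Even (m + 1)
  · have h : PowerSeries.coeff (m + 1) (evenSeries p q) =
        refinedEulerian (m + 1) p q / (m + 1).factorial := by simp [evenSeries, hm]
    rw [h, refinedEulerian_succ_div_factorial]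
    refine sum_congr rfl fun a ha => ?_
    rw [← mem_antidiagonal.mp ha, add_assoc, Nat.even_add] at hm
    by_cases h1 : Even a.1
    · rw [coeff_oddSeries_of_even _ _ h1, coeff_sinhSeries_of_even _ (hm.mp h1), parityWeight,
        if_pos h1]
      ring
    · rw [coeff_evenSeries_of_odd _ _ h1, coeff_coshSeries_of_odd _ (mt hm.mpr h1)]
      ring
  · have h : PowerSeries.coeff (m + 1) (evenSeries p q) = 0 := by simp [evenSeries, hm]
    rw [h, eq_comm]
    refine sum_eq_zero fun a ha => ?_
    rw [← mem_antidiagonal.mp ha, add_assoc, Nat.even_add] at hm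
    by_cases h1 : Even a.1
    · rw [coeff_oddSeries_of_even _ _ h1,
        coeff_coshSeries_of_odd _ (fun h2 => hm (iff_of_true h1 h2))]
      ring
    · rw [coeff_evenSeries_of_odd _ _ h1, coeff_sinhSeries_of_even (m := a.2 + 1) _
        (by_contra fun h2 => hm (iff_of_false h1 h2))]
      ring

lemma oddSeries_eq_sinhSeries_add (p q : ℝ) :
    oddSeries p q = sinhSeries ((1 - p) * (1 - q)) +
      PowerSeries.C (p + q) * (oddSeries p q * coshSeries ((1 - p) * (1 - q))) := by
  have h1 := oddSeries_eq p q
  have h2 := evenSeries_eq p q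
  have h3 := sinhSeries_sq ((1 - p) * (1 - q))
  set s := sinhSeries ((1 - p) * (1 - q))
  set c := coshSeries ((1 - p) * (1 - q))
  set O := oddSeries p q
  set V := evenSeries p q
  simp only [map_add, map_mul, map_sub, map_one] at h1 h2 h3 ⊢
  set P := PowerSeries.C p
  set Q := PowerSeries.C q
  linear_combination (1 - Q * (1 - P) * c) * h1 + Q * s * h2 + P * Q * O * h3

lemma coeff_oddSeries_rescale (p q : ℝ) (h : 1 + p * q ≠ 0) (m : ℕ) :
    PowerSeries.coeff m (oddSeries p q) =
      (1 + p * q) ^ (m / 2) *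
        PowerSeries.coeff m (oddSeries 0 ((p + q) / (1 + p * q))) := by
  have hr : (1 - p) * (1 - q) = (1 + p * q) * ((1 - 0) * (1 - (p + q) / (1 + p * q))) := by
    field_simp
    ring
  have ht : p + q = (1 + p * q) * (0 + (p + q) / (1 + p * q)) := by
    field_simp
    ring
  generalize (p + q) / (1 + p * q) = t at hr ht ⊢
  induction m using Nat.strong_induction_on with
  | _ m ih =>
    rw [oddSeries_eq_sinhSeries_add p q, oddSeries_eq_sinhSeries_add 0 t, hr, ht]
    simp only [map_add (PowerSeries.coeff m), PowerSeries.coeff_C_mul]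
    rw [PowerSeries.coeff_mul, PowerSeries.coeff_mul, mul_add (_ ^ _)]
    congr 1
    · simp only [sinhSeries, PowerSeries.coeff_mk]
      split_ifs
      · simp
      · rw [mul_pow, mul_div_assoc]
    · rw [mul_sum, mul_sum, mul_sum]
      refine sum_congr rfl fun a ha => ?_
      have ha := mem_antidiagonal.mp ha
      simp only [coshSeries, PowerSeries.coeff_mk]
      split_ifs with hk
      · obtain ⟨hk, k, hk'⟩ := hk
        rw [ih a.1 (by omega), mul_pow,
          show m / 2 = a.1 / 2 + (a.2 / 2 - 1) + 1 by omega, pow_succ, pow_add]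
        ring
      · simp

/-- A_{2n+1}(p,q) = (1+pq)^n A_{2n+1}(0, (p+q)/(1+pq)). -/
theorem refinedEulerian_odd_reduction (n : ℕ) (p q : ℝ) (h : 1 + p * q ≠ 0) :
    refinedEulerian (2 * n + 1) p q =
      (1 + p * q) ^ n * refinedEulerian (2 * n + 1) 0 ((p + q) / (1 + p * q)) := by
  have key := coeff_oddSeries_rescale p q h (2 * n + 1)
  have hn : (2 * n + 1) / 2 = n := by omega
  simp only [oddSeries, PowerSeries.coeff_mk, hn] at key
  rw [if_neg (by simp), if_neg (by simp)] at key
  have hf : ((2 * n + 1).factorial : ℝ) ≠ 0 := Nat.cast_ne_zero.mpr (Nat.factorial_ne_zero _)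
  rw [← mul_div_assoc, div_left_inj' hf] at key
  exact key
end

section
/- For all n ≥ k ≥ 0, the Eulerian number satisfies A_{2n+1,k} = Σ_{i=0}^{⌊k/2⌋} C(n-k+2i, i) · 2^{k-2i} · a_{2n+1,k-2i}, where a_{m,j} counts permutations of [m] with j even descents and no odd descents. -/
open Finset

namespace EulerianOdd

/-- The weight of a list in which every descent contributes a factor: `a` for the descents at odd
(1-based) positions and `b` for those at even positions. -/
def descWeight : ℝ → ℝ → List ℕ → ℝ
  | _, _, [] => 1
  | _, _, [_] => 1
  | a, b, x :: y :: l => (if y < x then a else 1) * descWeight b a (y :: l)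

lemma descWeight_append_cons (M : ℕ) (l₂ : List ℕ) (h₂ : ∀ x ∈ l₂, x < M) :
    ∀ (l₁ : List ℕ) (a b : ℝ), (∀ x ∈ l₁, x < M) →
      descWeight a b (l₁ ++ M :: l₂) = descWeight a b l₁ *
        (if l₂.length = 0 then 1 else if Even l₁.length then a else b) *
        (if Even l₁.length then descWeight b a l₂ else descWeight a b l₂)
  | [], a, b, _ => by
    cases l₂ with
    | nil => simp [descWeight]
    | cons y l => simp [descWeight, h₂ y (by simp)]
  | [x], a, b, h₁ => by
    have hx : ¬ M < x := not_lt.2 (h₁ x (by simp)).le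
    cases l₂ with
    | nil => simp [descWeight, hx]
    | cons y l => simp [descWeight, hx, h₂ y (by simp)]
  | x :: y :: l, a, b, h₁ => by
    have ih := descWeight_append_cons M l₂ h₂ (y :: l) b a
      (fun z hz => h₁ z (List.mem_cons_of_mem _ hz))
    simp only [List.cons_append, descWeight, List.length_cons, Nat.even_add_one, not_not]
      at ih ⊢
    rw [ih]
    split_ifs <;> ring

lemma mem_lists_val {S : Finset ℕ} {l : List ℕ} :
    l ∈ S.val.lists.toFinset ↔ l.Nodup ∧ ∀ x, x ∈ l ↔ x ∈ S := by
  rw [Multiset.mem_toFinset, Multiset.mem_lists_iff]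
  constructor
  · intro h
    have h' := S.nodup
    simp only [← Finset.mem_val]
    rw [h] at h' ⊢
    simpa using h'
  · rintro ⟨h, hx⟩
    exact (Multiset.Nodup.ext S.nodup (Multiset.coe_nodup.2 h)).2 (by simp [hx])

lemma length_of_mem_lists {S : Finset ℕ} {l : List ℕ} (h : l ∈ S.val.lists.toFinset) :
    l.length = #S := by
  rw [Multiset.mem_toFinset, Multiset.mem_lists_iff] at h
  simp [Finset.card_def, h]

/-- The total weight of the orderings of a finite set. -/
def orderingsWeight (a b : ℝ) (S : Finset ℕ) : ℝ := ∑ l ∈ S.val.lists.toFinset, descWeight a b l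

/-- The weight created by the maximum of a list that has `i` entries before it and `j` after. -/
def peakWeight (a b : ℝ) (i j : ℕ) : ℝ := if j = 0 then 1 else if Even i then a else b

lemma orderingsWeight_insert {a b : ℝ} (hab : a = b ∨ a = 0) {S : Finset ℕ} {M : ℕ}
    (hM : ∀ x ∈ S, x < M) :
    orderingsWeight a b (insert M S) = ∑ T ∈ S.powerset,
      peakWeight a b (#T) (#(S \ T)) * (orderingsWeight a b T * orderingsWeight a b (S \ T)) := by
  simp only [orderingsWeight, Finset.sum_mul_sum]
  simp only [← Finset.sum_product', Finset.mul_sum]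
  rw [Finset.sum_sigma']
  symm
  refine Finset.sum_bij (fun x _ => x.2.1 ++ M :: x.2.2) ?_ ?_ ?_ ?_
  · rintro ⟨T, l₁, l₂⟩ h
    simp only [Finset.mem_sigma, Finset.mem_powerset, Finset.mem_product, mem_lists_val] at h ⊢
    obtain ⟨hT, ⟨n₁, m₁⟩, n₂, m₂⟩ := h
    have hMS : M ∉ S := fun h => lt_irrefl _ (hM M h)
    refine ⟨?_, ?_⟩
    · rw [List.nodup_append]
      simp only [List.nodup_cons, m₂]
      grind
    · intro x
      simp only [List.mem_append, List.mem_cons, m₁, m₂, Finset.mem_insert]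
      grind
  · rintro ⟨T, l₁, l₂⟩ h ⟨T', l₁', l₂'⟩ h' heq
    simp only [Finset.mem_sigma, Finset.mem_powerset, Finset.mem_product, mem_lists_val] at h h'
    have hMS : M ∉ S := fun h => lt_irrefl _ (hM M h)
    obtain ⟨hT, ⟨n₁, m₁⟩, n₂, m₂⟩ := h
    obtain ⟨hT', ⟨n₁', m₁'⟩, n₂', m₂'⟩ := h'
    have e : l₁ = l₁' ∧ l₂ = l₂' := by
      simp only at heq
      have := (List.append_cons_inj_of_notMem (by grind) (by grind)).1 heq
      exact ⟨this.1, this.2.2⟩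
    obtain ⟨rfl, rfl⟩ := e
    obtain rfl : T = T' := by ext x; rw [← m₁, ← m₁']
    rfl
  · intro l hl
    rw [mem_lists_val] at hl
    obtain ⟨n, m⟩ := hl
    have hMS : M ∉ S := fun h => lt_irrefl _ (hM M h)
    obtain ⟨l₁, l₂, rfl⟩ := List.append_of_mem ((m M).2 (by simp))
    refine ⟨⟨l₁.toFinset, l₁, l₂⟩, ?_, rfl⟩
    simp only [Finset.mem_sigma, Finset.mem_powerset, Finset.mem_product, mem_lists_val]
    rw [List.nodup_append] at n
    simp only [List.nodup_cons] at n
    simp only [List.mem_append, List.mem_cons, Finset.mem_insert] at m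
    refine ⟨?_, ⟨n.1, by simp⟩, n.2.1.2, ?_⟩
    · intro x hx
      rw [List.mem_toFinset] at hx
      grind
    · intro x
      rw [Finset.mem_sdiff, List.mem_toFinset]
      grind
  · rintro ⟨T, l₁, l₂⟩ h
    simp only [Finset.mem_sigma, Finset.mem_powerset, Finset.mem_product] at h
    obtain ⟨hT, h₁, h₂⟩ := h
    rw [descWeight_append_cons, length_of_mem_lists h₁, length_of_mem_lists h₂, peakWeight]
    · rcases hab with rfl | rfl
      · simp only [ite_self]
        ring
      · by_cases h0 : #(S \ T) = 0
        · have : l₂ = [] := List.length_eq_zero_iff.1 ((length_of_mem_lists h₂).trans h0)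
          simp [this, h0, descWeight]
        · simp only [h0, if_false]
          split_ifs <;> ring
    · intro x hx
      exact hM x (Finset.sdiff_subset (((mem_lists_val.1 h₂).2 x).1 hx))
    · intro x hx
      exact hM x (hT (((mem_lists_val.1 h₁).2 x).1 hx))

lemma orderingsWeight_insert_of_card {a b : ℝ} (hab : a = b ∨ a = 0) {S : Finset ℕ} {M : ℕ}
    (hM : ∀ x ∈ S, x < M)
    (hS : ∀ T ⊆ S, orderingsWeight a b T = orderingsWeight a b (range (#T))) :
    orderingsWeight a b (insert M S) = ∑ i ∈ range (#S + 1), (#S).choose i •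
      (peakWeight a b i (#S - i) *
        (orderingsWeight a b (range i) * orderingsWeight a b (range (#S - i)))) := by
  rw [orderingsWeight_insert hab hM, ← Finset.sum_powerset_apply_card (fun i =>
    peakWeight a b i (#S - i) *
      (orderingsWeight a b (range i) * orderingsWeight a b (range (#S - i))))]
  refine Finset.sum_congr rfl fun T hT => ?_
  rw [Finset.mem_powerset] at hT
  rw [hS T hT, hS (S \ T) Finset.sdiff_subset, Finset.card_sdiff_of_subset hT]

lemma orderingsWeight_eq_range {a b : ℝ} (hab : a = b ∨ a = 0) (S : Finset ℕ) :
    orderingsWeight a b S = orderingsWeight a b (range (#S)) := by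
  induction hn : #S using Nat.strong_induction_on generalizing S with
  | _ n ih =>
    rcases n with _ | n
    · rw [Finset.card_eq_zero.1 hn, Finset.range_zero]
    · have hsub : ∀ U : Finset ℕ, #U = n →
          ∀ T ⊆ U, orderingsWeight a b T = orderingsWeight a b (range (#T)) := by
        intro U hU T hT
        have h1 := Finset.card_le_card hT
        exact ih (#T) (by omega) T rfl
      have hne : S.Nonempty := Finset.card_pos.1 (by omega)
      have hc : #(S.erase (S.max' hne)) = n := by
        rw [Finset.card_erase_of_mem (S.max'_mem hne), hn]; rfl
      rw [Finset.range_add_one, orderingsWeight_insert_of_card hab (by simp)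
        (hsub _ (Finset.card_range n)), Finset.card_range, ← Finset.insert_erase (S.max'_mem hne),
        orderingsWeight_insert_of_card hab _ (hsub _ hc), hc]
      intro x hx
      exact S.lt_max'_of_mem_erase_max' hne hx

lemma orderingsWeight_range_succ {a b : ℝ} (hab : a = b ∨ a = 0) (n : ℕ) :
    orderingsWeight a b (range (n + 1)) = ∑ ij ∈ antidiagonal n, (n.choose ij.1 : ℝ) *
      (peakWeight a b ij.1 ij.2 *
        (orderingsWeight a b (range ij.1) * orderingsWeight a b (range ij.2))) := by
  rw [Finset.range_add_one, orderingsWeight_insert_of_card hab (by simp)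
    (fun T _ => orderingsWeight_eq_range hab T), Finset.Nat.sum_antidiagonal_eq_sum_range_succ_mk]
  simp

lemma descWeight_eq_prod (a b : ℝ) (l : List ℕ) :
    descWeight a b l = ∏ i ∈ range l.length,
      if ∃ h : i + 1 < l.length, l[i + 1] < l[i] then (if Even i then a else b) else 1 := by
  induction l generalizing a b with
  | nil => simp [descWeight]
  | cons x l ih =>
    cases l with
    | nil => simp [descWeight]
    | cons y l =>
      refine Eq.trans ?_ (Finset.prod_range_succ' _ (y :: l).length).symm
      rw [descWeight, ih, mul_comm]
      congr 1
      · refine Finset.prod_congr rfl fun i _ => ?_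
        simp only [List.getElem_cons_succ, Nat.even_add_one, List.length_cons,
          Nat.add_lt_add_iff_right]
        split_ifs <;> simp_all
      · simp

lemma descWeight_ofFn (a b : ℝ) {m : ℕ} (π : Equiv.Perm (Fin m)) :
    descWeight a b (List.ofFn fun i => (π i : ℕ)) = a ^ odes π * b ^ edes π := by
  rw [descWeight_eq_prod, odes, edes, ← Finset.prod_const, ← Finset.prod_const]
  simp only [← Nat.not_even_iff_odd]
  rw [← Finset.prod_ite, descentSet, Finset.prod_filter]
  refine Finset.prod_congr (by simp) fun i _ => ?_
  simp only [List.getElem_ofFn, Fin.val_fin_lt, List.length_ofFn]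

lemma orderingsWeight_range_eq_sum (a b : ℝ) (m : ℕ) :
    orderingsWeight a b (range m) = ∑ π : Equiv.Perm (Fin m), a ^ odes π * b ^ edes π := by
  symm
  refine Finset.sum_bij (fun π _ => List.ofFn fun i => (π i : ℕ)) ?_ ?_ ?_ ?_
  · intro π _
    rw [mem_lists_val]
    refine ⟨List.nodup_ofFn.2 (Fin.val_injective.comp π.injective), fun x => ?_⟩
    rw [List.mem_ofFn', Set.mem_range, Finset.mem_range]
    constructor
    · rintro ⟨i, rfl⟩
      exact (π i).2
    · intro hx
      exact ⟨π.symm ⟨x, hx⟩, by simp⟩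
  · intro π _ σ _ h
    have := List.ofFn_injective h
    ext i
    exact congrFun this i
  · intro l hl
    have hlen : l.length = m := by rw [length_of_mem_lists hl, Finset.card_range]
    subst hlen
    rw [mem_lists_val] at hl
    let f : Fin l.length → Fin l.length := fun i =>
      ⟨l[i], Finset.mem_range.1 ((hl.2 _).1 (List.getElem_mem i.2))⟩
    have hf : Function.Injective f := fun i j hij =>
      List.nodup_iff_injective_get.1 hl.1 (congrArg Fin.val hij)
    exact ⟨Equiv.ofBijective f (Finite.injective_iff_bijective.1 hf), Finset.mem_univ _,
      by simp [f]⟩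
  · intro π _
    rw [descWeight_ofFn]

open PowerSeries in
lemma eq_zero_of_linear_system {d e p q r s : ℝ⟦X⟧} (hd : d⁄dX ℝ d = p * d + q * e)
    (he : d⁄dX ℝ e = r * d + s * e) (hd₀ : constantCoeff d = 0) (he₀ : constantCoeff e = 0) :
    d = 0 ∧ e = 0 := by
  have step : ∀ (f : ℝ⟦X⟧) (n : ℕ), constantCoeff f = 0 → X ^ n ∣ d⁄dX ℝ f → X ^ (n + 1) ∣ f := by
    intro f n hf h
    rw [X_pow_dvd_iff] at h ⊢
    rintro (_ | m) hm
    · simpa using hf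
    · have := h m (by omega)
      rw [coeff_derivative] at this
      exact (mul_eq_zero.1 this).resolve_right (by positivity)
  have key : ∀ n : ℕ, X ^ n ∣ d ∧ X ^ n ∣ e := by
    intro n
    induction n with
    | zero => simp
    | succ n ih =>
      refine ⟨step d n hd₀ ?_, step e n he₀ ?_⟩
      · rw [hd]
        exact dvd_add (ih.1.mul_left _) (ih.2.mul_left _)
      · rw [he]
        exact dvd_add (ih.1.mul_left _) (ih.2.mul_left _)
  have zero : ∀ f : ℝ⟦X⟧, (∀ n : ℕ, X ^ n ∣ f) → f = 0 := fun f hf => by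
    ext n
    exact X_pow_dvd_iff.1 (hf (n + 1)) n (Nat.lt_succ_self n)
  exact ⟨zero d fun n => (key n).1, zero e fun n => (key n).2⟩

open PowerSeries in
lemma derivative_rescale (c : ℝ) (f : ℝ⟦X⟧) :
    d⁄dX ℝ (rescale c f) = C c * rescale c (d⁄dX ℝ f) := by
  ext n
  simp only [coeff_derivative, coeff_rescale, coeff_C_mul]
  ring

open PowerSeries in
/-- The exponential generating function of the bivariate descent polynomials. -/
noncomputable def descSeries (a b : ℝ) : ℝ⟦X⟧ :=
  PowerSeries.mk fun m => orderingsWeight a b (range m) / m.factorial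

open PowerSeries in
lemma constantCoeff_descSeries (a b : ℝ) : constantCoeff (descSeries a b) = 1 := by
  rw [← coeff_zero_eq_constantCoeff_apply, descSeries, coeff_mk, orderingsWeight_range_eq_sum]
  simp [odes, edes, descentSet]

open PowerSeries in
lemma derivative_descSeries {a b : ℝ} (hab : a = b ∨ a = 0) :
    d⁄dX ℝ (descSeries a b) = descSeries a b +
      (C (a / 2) * (descSeries a b + rescale (-1) (descSeries a b)) +
        C (b / 2) * (descSeries a b - rescale (-1) (descSeries a b))) * (descSeries a b - 1) := by
  have h0 : orderingsWeight a b (range 0) = 1 := by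
    have := constantCoeff_descSeries a b
    rw [← coeff_zero_eq_constantCoeff_apply, descSeries, coeff_mk] at this
    simpa using this
  have h : d⁄dX ℝ (descSeries a b) = descSeries a b * 1 +
      (C (a / 2) * (descSeries a b + rescale (-1) (descSeries a b)) +
        C (b / 2) * (descSeries a b - rescale (-1) (descSeries a b))) * (descSeries a b - 1) := by
    ext n
    rw [coeff_derivative, map_add, coeff_mul, coeff_mul, ← Finset.sum_add_distrib, descSeries,
      coeff_mk, orderingsWeight_range_succ hab, Finset.sum_div, Finset.sum_mul]
    refine Finset.sum_congr rfl fun ij hij => ?_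
    obtain ⟨i, j⟩ := ij
    rw [Finset.HasAntidiagonal.mem_antidiagonal] at hij
    simp only at hij
    subst hij
    have hc : ((i + j).choose i : ℝ) = (i + j).factorial / (i.factorial * j.factorial) := by
      rw [Nat.cast_add_choose]
    have f1 : ((i + j + 1).factorial : ℝ) = (i + j + 1) * (i + j).factorial := by
      rw [Nat.factorial_succ]; push_cast; ring
    have p1 : ((i + j).factorial : ℝ) ≠ 0 := by positivity
    have p2 : (i.factorial : ℝ) ≠ 0 := by positivity
    have p3 : (j.factorial : ℝ) ≠ 0 := by positivity
    have p4 : ((i : ℝ) + j + 1) ≠ 0 := by positivity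
    simp only [map_add, map_sub, coeff_C_mul, coeff_rescale, coeff_mk, coeff_one, peakWeight]
    rw [hc, f1]
    rcases Nat.eq_zero_or_pos j with rfl | hj
    · rw [Finset.range_zero] at h0
      simp [h0]
      field_simp
    · have hj' := hj.ne'
      rcases Nat.even_or_odd i with hi | hi
      · simp [hj', hi, hi.neg_one_pow]
        field_simp
        ring
      · simp [hj', Nat.not_even_iff_odd.2 hi, hi.neg_one_pow]
        field_simp
        ring
  rwa [mul_one] at h

open PowerSeries in
lemma odd_part_unique {q : ℝ} {F G f g : ℝ⟦X⟧}
    (hF : d⁄dX ℝ F = C (1 - q) * G + C q * (F * F + G * G))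
    (hG : d⁄dX ℝ G = C (1 - q) * F + C (2 * q) * (F * G))
    (hF₀ : constantCoeff F = 0) (hG₀ : constantCoeff G = 1)
    (hf : d⁄dX ℝ f = g + C (2 * q) * (f * f))
    (hg : d⁄dX ℝ g = C (1 + q ^ 2) * f + C (2 * q) * (f * (g - 1)))
    (hf₀ : constantCoeff f = 0) (hg₀ : constantCoeff g = 1) : F = f := by
  obtain ⟨V, hV⟩ : ∃ V : ℝ⟦X⟧, V * (1 + C q ^ 2) = 1 ∧ d⁄dX ℝ V = 0 ∧
      constantCoeff V * (1 + q ^ 2) = 1 := by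
    have hw : (1 + q ^ 2) ≠ 0 := by positivity
    refine ⟨C (1 + q ^ 2)⁻¹, ?_, derivative_C, ?_⟩
    · rw [← map_pow, ← map_one (C (R := ℝ)), ← map_add, ← map_mul, inv_mul_cancel₀ hw]
    · rw [constantCoeff_C, inv_mul_cancel₀ hw]
  obtain ⟨hV, hV', hV₀⟩ := hV
  simp only [map_add, map_sub, map_mul, map_pow, map_one, map_ofNat] at hF hG hf hg
  have hQ' : d⁄dX ℝ (C q) = 0 := derivative_C
  have hQ₀ : constantCoeff (C q) = q := constantCoeff_C q
  generalize C q = Q at *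
  have h4 : d⁄dX ℝ (4 : ℝ⟦X⟧) = 0 := by exact_mod_cast Derivation.map_natCast (d⁄dX ℝ) 4
  -- a conserved quantity of the system for `f` and `g`
  have hI : (1 + Q ^ 2) ^ 2 * (f * f) - ((1 + Q) ^ 2 * (g * g) - 4 * Q * g - (1 - Q) ^ 2) = 0 := by
    refine (eq_zero_of_linear_system (e := 0) (p := 4 * Q * f) (q := 0) (r := 0) (s := 0)
      ?_ (by simp) ?_ (by simp)).1
    · simp only [map_add, map_sub, Derivation.leibniz, Derivation.leibniz_pow, smul_eq_mul,
        Derivation.map_one_eq_zero, hf, hg, hQ', h4]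
      ring
    · simp only [map_add, map_sub, map_mul, map_pow, map_one, map_ofNat, hf₀, hg₀, hQ₀]
      ring
  have hd := eq_zero_of_linear_system (d := F - f) (e := G - V * ((1 + Q) * g - Q * (1 - Q)))
    (p := Q * (F + f)) (q := (1 - Q) + Q * (G + V * ((1 + Q) * g - Q * (1 - Q))))
    (r := (1 - Q) + 2 * Q * (V * ((1 + Q) * g - Q * (1 - Q)))) (s := 2 * Q * F)
    ?_ ?_ ?_ ?_
  · exact sub_eq_zero.1 hd.1
  · rw [map_sub, hF, hf]
    linear_combination (-(V ^ 2 * Q)) * hI + ((V * (1 + Q ^ 2) + 1) * (g + Q * (f * f)) -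
      (1 - Q) * (V * ((1 + Q) * g - Q * (1 - Q)))) * hV
  · simp only [map_add, map_sub, Derivation.leibniz, smul_eq_mul,
      Derivation.map_one_eq_zero, hG, hg, hQ', hV']
    linear_combination (-(f * (1 - Q))) * hV
  · simp [hF₀, hf₀]
  · simp only [map_add, map_sub, map_mul, map_one, hG₀, hg₀, hQ₀]
    linear_combination -hV₀

open PowerSeries in
lemma orderingsWeight_diagonal (q : ℝ) (n : ℕ) :
    orderingsWeight q q (range (2 * n + 1)) =
      (1 + q ^ 2) ^ n * orderingsWeight 0 (2 * q / (1 + q ^ 2)) (range (2 * n + 1)) := by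
  have hw : (0 : ℝ) < 1 + q ^ 2 := by positivity
  obtain ⟨c, hc₀, hc⟩ : ∃ c : ℝ, 0 < c ∧ c ^ 2 = 1 + q ^ 2 :=
    ⟨√(1 + q ^ 2), Real.sqrt_pos.2 hw, Real.sq_sqrt hw.le⟩
  have hs : c ^ 2 * (2 * q / (1 + q ^ 2) / 2) = q := by
    rw [hc]
    field_simp
  set s : ℝ := 2 * q / (1 + q ^ 2)
  set A := descSeries q q with hA
  set B := descSeries 0 s with hB
  have dA := derivative_descSeries (a := q) (b := q) (Or.inl rfl)
  have dB := derivative_descSeries (a := 0) (b := s) (Or.inr rfl)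
  have dA' := derivative_rescale (-1) A
  have dP := derivative_rescale c B
  have dN := derivative_rescale (-c) B
  rw [← hA] at dA
  rw [← hB] at dB
  have hC : ∀ a r : ℝ, rescale a (C r) = C r := fun a r => by
    ext n
    rw [coeff_rescale, coeff_C]
    split_ifs with h <;> simp [h]
  rw [dA] at dA'
  rw [dB] at dP dN
  simp only [map_add, map_sub, map_mul, map_one, hC, rescale_rescale, mul_neg, mul_one, neg_neg,
    neg_mul, one_mul, rescale_one, RingHom.id_apply, zero_div, map_zero, zero_mul, zero_add,
    map_neg] at dA dA' dP dN
  set A' := rescale (-1) A with hA'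
  set P := rescale c B with hP
  set N := rescale (-c) B with hN
  have hA₀ : constantCoeff A = 1 := constantCoeff_descSeries q q
  have hB₀ : constantCoeff B = 1 := constantCoeff_descSeries 0 s
  have hresc : ∀ (a : ℝ) (f : ℝ⟦X⟧), constantCoeff (rescale a f) = constantCoeff f := fun a f => by
    rw [← coeff_zero_eq_constantCoeff_apply, coeff_rescale, pow_zero, one_mul,
      coeff_zero_eq_constantCoeff_apply]
  have r1 : C (1 / 2 : ℝ) * 2 = (1 : ℝ⟦X⟧) := by
    rw [← map_ofNat (C (R := ℝ)) 2, ← map_mul]; norm_num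
  have r2 : C (1 / (2 * c)) * C c * 2 = (1 : ℝ⟦X⟧) := by
    rw [← map_ofNat (C (R := ℝ)) 2, ← map_mul, ← map_mul, ← map_one (C (R := ℝ))]
    congr 1
    field_simp
  have r3 : C c ^ 2 * C (s / 2) = C q := by rw [← map_pow, ← map_mul, hs]
  have r4 : C c ^ 2 = C (1 + q ^ 2) := by rw [← map_pow, hc]
  have r5 : C (q / 2) * 2 = C q := by
    rw [← map_ofNat (C (R := ℝ)) 2, ← map_mul]; norm_num
  have hFf := odd_part_unique (q := q) (F := C (1 / 2) * (A - A')) (G := C (1 / 2) * (A + A'))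
    (f := C (1 / (2 * c)) * (P - N)) (g := C (1 / 2) * (P + N)) ?_ ?_ ?_ ?_ ?_ ?_ ?_ ?_
  · have hco := congrArg (coeff (2 * n + 1)) hFf
    have hodd : Odd (2 * n + 1) := ⟨n, rfl⟩
    simp only [coeff_C_mul, map_sub, coeff_rescale, hA', hP, hN, hA, hB, descSeries, coeff_mk,
      hodd.neg_pow, one_pow] at hco
    have hfac : ((2 * n + 1).factorial : ℝ) ≠ 0 := by positivity
    rw [← hc, ← pow_mul]
    field_simp at hco
    rw [pow_succ] at hco
    exact mul_right_cancel₀ hc₀.ne' (by rw [hco]; ring)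
  · simp only [Derivation.leibniz, derivative_C, smul_eq_mul, map_sub, map_one, dA, dA']
    linear_combination (C (1 / 2) * (A * (A - 1) + A' * (A' - 1))) * r5 -
      C (1 / 2) * C q * (A * A + A' * A') * r1
  · simp only [Derivation.leibniz, derivative_C, smul_eq_mul, map_add, map_sub, map_mul, map_one,
      map_ofNat, dA, dA']
    linear_combination (C (1 / 2) * (A * (A - 1) - A' * (A' - 1))) * r5 -
      C (1 / 2) * C q * (A * A - A' * A') * r1
  · simp [hA', hresc]
  · simp only [hA', map_mul, map_add, hresc, hA₀, constantCoeff_C]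
    norm_num
  · simp only [Derivation.leibniz, derivative_C, smul_eq_mul, map_sub, map_mul, map_ofNat, dP, dN]
    linear_combination (P + N) * (C (1 / 2) * r2 - C (1 / (2 * c)) * C c * r1) +
      (P - N) ^ 2 * (2 * C (1 / (2 * c)) ^ 2 * r3 - C (1 / (2 * c)) * C c * C (s / 2) * r2)
  · simp only [Derivation.leibniz, derivative_C, smul_eq_mul, map_add, map_mul, map_pow, map_one,
      map_ofNat, dP, dN] at r4 ⊢
    linear_combination (P - N) * (C c * (C (1 / (2 * c)) * C c * r1 - C (1 / 2) * r2) +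
      C (1 / (2 * c)) * r4 + 2 * C (1 / (2 * c)) * (C (1 / 2) * (P + N) - 1) * r3 -
      C c * C (s / 2) * (C (1 / 2) * (P + N) - 1) * r2 - C c * C (s / 2) * r1)
  · simp [hP, hN, hresc]
  · simp only [hP, hN, map_mul, map_add, hresc, hB₀, constantCoeff_C]
    norm_num

lemma edes_le (n : ℕ) (π : Equiv.Perm (Fin (2 * n + 1))) : edes π ≤ n := by
  rw [edes]
  conv_rhs => rw [← Finset.card_range n]
  refine Finset.card_le_card_of_injOn (fun i => i / 2) ?_ ?_
  · intro i hi
    simp only [descentSet, Finset.coe_filter, Finset.mem_filter, Finset.mem_range,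
      Set.mem_ofPred_eq] at hi
    obtain ⟨⟨-, h, -⟩, k, rfl⟩ := hi
    simp only [Finset.coe_range, Set.mem_Iio]
    omega
  · intro i hi j hj hij
    simp only [Finset.coe_filter, Set.mem_ofPred_eq] at hi hj hij
    obtain ⟨-, k, rfl⟩ := hi
    obtain ⟨-, l, rfl⟩ := hj
    omega

lemma odes_add_edes {m : ℕ} (π : Equiv.Perm (Fin m)) : odes π + edes π = des π := by
  rw [odes, edes, des]
  simp only [← Nat.not_even_iff_odd]
  exact Finset.card_filter_add_card_filter_not _

lemma sum_pow_edes (n : ℕ) (s : ℝ) :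
    ∑ π : Equiv.Perm (Fin (2 * n + 1)), (0 : ℝ) ^ odes π * s ^ edes π =
      ∑ j ∈ range (n + 1), (aNum (2 * n + 1) j : ℝ) * s ^ j := by
  rw [← Finset.sum_fiberwise_of_maps_to (g := edes) (t := range (n + 1))
    (fun π _ => Finset.mem_range.2 (Nat.lt_succ_of_le (edes_le n π)))]
  refine Finset.sum_congr rfl fun j _ => ?_
  rw [aNum, ← nsmul_eq_mul, ← Finset.sum_const, ← Finset.filter_filter,
    Finset.sum_filter (odes · = 0)]
  refine Finset.sum_congr rfl fun π hπ => ?_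
  rw [Finset.mem_filter] at hπ
  rw [hπ.2, zero_pow_eq]
  split_ifs <;> simp

open Polynomial in
lemma eulerianPolynomial_odd (n : ℕ) :
    eulerianPolynomial (2 * n + 1) = ∑ j ∈ range (n + 1),
      C ((2 : ℝ) ^ j * aNum (2 * n + 1) j) * (X ^ j * expand ℝ 2 ((1 + X) ^ (n - j))) := by
  refine Polynomial.funext fun q => ?_
  have hw : (1 + q ^ 2) ≠ 0 := by positivity
  have h := orderingsWeight_diagonal q n
  rw [orderingsWeight_range_eq_sum, orderingsWeight_range_eq_sum, sum_pow_edes] at h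
  simp only [← pow_add, odes_add_edes] at h
  simp only [eulerianPolynomial, eval_finsetSum, eval_mul, eval_pow, eval_X, eval_C, expand_eval,
    eval_add, eval_one]
  rw [h, Finset.mul_sum]
  refine Finset.sum_congr rfl fun j hj => ?_
  obtain ⟨d, rfl⟩ := Nat.exists_eq_add_of_le (Nat.lt_succ_iff.1 (Finset.mem_range.1 hj))
  rw [Nat.add_sub_cancel_left, pow_add, div_pow, mul_pow]
  field_simp

lemma coeff_eulerianPolynomial (m k : ℕ) :
    (eulerianPolynomial m).coeff k = eulerianNumber m k := by
  simp only [eulerianPolynomial, Polynomial.finsetSum_coeff, Polynomial.coeff_X_pow,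
    Finset.sum_boole, eulerianNumber, eq_comm]

end EulerianOdd

/-- A_{2n+1,k} = Σ_{i=0}^{⌊k/2⌋} C(n-k+2i, i) 2^{k-2i} a_{2n+1,k-2i}. -/
theorem eulerianNumber_odd_expansion (n k : ℕ) (h : k ≤ n) :
    eulerianNumber (2 * n + 1) k =
      ∑ i ∈ Finset.range (k / 2 + 1),
        (n - k + 2 * i).choose i * 2 ^ (k - 2 * i) * aNum (2 * n + 1) (k - 2 * i) := by
  have hk := EulerianOdd.coeff_eulerianPolynomial (2 * n + 1) k
  rw [EulerianOdd.eulerianPolynomial_odd, Polynomial.finsetSum_coeff] at hk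
  rw [← Nat.cast_inj (R := ℝ), ← hk, Nat.cast_sum]
  symm
  refine Finset.sum_of_injOn (fun i => k - 2 * i) ?_ ?_ ?_ ?_
  · intro i hi j hj hij
    simp only [Finset.coe_range, Set.mem_Iio] at hi hj hij
    omega
  · intro i hi
    simp only [Finset.coe_range, Set.mem_Iio] at hi ⊢
    omega
  · intro j hj hne
    rw [Polynomial.coeff_C_mul, Polynomial.coeff_X_pow_mul', Polynomial.coeff_expand two_pos]
    split_ifs with h1 h2
    · refine absurd ⟨(k - j) / 2, ?_, ?_⟩ hne
      · simp only [Finset.coe_range, Set.mem_Iio]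
        omega
      · simp only
        omega
    · simp
    · simp
  · intro i hi
    rw [Finset.mem_range] at hi
    have h1 : k - (k - 2 * i) = 2 * i := by omega
    have h2 : n - (k - 2 * i) = n - k + 2 * i := by omega
    rw [Polynomial.coeff_C_mul, Polynomial.coeff_X_pow_mul', Polynomial.coeff_expand two_pos,
      if_pos (Nat.sub_le _ _), h1, if_pos (dvd_mul_right _ _), Nat.mul_div_cancel_left _ two_pos,
      Polynomial.coeff_one_add_X_pow, h2]
    push_cast
    ring
end
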